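/- arXiv:1410.5043 — 2 statements merged into one kernel-verified Lean document; each statement's English description precedes it below -/
import Mathlib

section
/- For every complex number z with −1 < Re(z) < 0 and every real s, one has Γ(z+is) Γ(z−is) = 4 ∫_0^∞ (x/2)^{2z} K_{2is}(x) · ( 1 + (2/x)^{2z} · (4z/Γ(1−2z)) · K_{2z}(x) ) · (1/x) dx, where the integral converges absolutely. -/
open MeasureTheory

/-- Macdonald function (modified Bessel function of the second kind) `K_w(y)` for
`y > 0` and `w ∈ ℂ`, defined by `K_w(y) = ∫_0^∞ e^{−y cosh t} cosh(w t) dt`. -/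
noncomputable def macdonaldK (w : ℂ) (y : ℝ) : ℂ :=
  ∫ t in Set.Ioi (0 : ℝ), Complex.exp (-(y : ℂ) * Real.cosh t) * Complex.cosh (w * t)

open Set Filter Topology

/-- Lebesgue measure on the positive half-line. -/
noncomputable abbrev muP : Measure ℝ := volume.restrict (Ioi (0 : ℝ))

lemma ae_prod_pos : ∀ᵐ q ∂(muP.prod muP), 0 < q.1 ∧ 0 < q.2 := by
  rw [Measure.prod_restrict]
  filter_upwards [ae_restrict_mem (measurableSet_Ioi.prod measurableSet_Ioi)] with q hq
  exact hq

lemma subst_prod (f : ℝ × ℝ → ℂ) (hm : Measurable f) (hf : Integrable f (muP.prod muP))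
    (φ φ' : ℝ → ℝ → ℝ) (hφ : Measurable fun q : ℝ × ℝ => φ q.2 q.1)
    (hφ' : Measurable fun q : ℝ × ℝ => φ' q.2 q.1)
    (hd : ∀ y, 0 < y → ∀ x ∈ Ioi (0 : ℝ), HasDerivWithinAt (φ y) (φ' y x) (Ioi 0) x)
    (hi : ∀ y, 0 < y → InjOn (φ y) (Ioi 0))
    (him : ∀ y, 0 < y → φ y '' Ioi 0 = Ioi 0) :
    Integrable (fun q : ℝ × ℝ => |φ' q.2 q.1| • f (φ q.2 q.1, q.2)) (muP.prod muP) ∧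
    ∫ q, |φ' q.2 q.1| • f (φ q.2 q.1, q.2) ∂(muP.prod muP) = ∫ q, f q ∂(muP.prod muP) := by
  have hI : Integrable (fun q : ℝ × ℝ => |φ' q.2 q.1| • f (φ q.2 q.1, q.2)) (muP.prod muP) := by
    rw [integrable_prod_iff']
    · rw [integrable_prod_iff' hf.1] at hf
      constructor
      · filter_upwards [hf.1, ae_restrict_mem measurableSet_Ioi] with y h1 hy
        have := integrableOn_image_iff_integrableOn_abs_deriv_smul measurableSet_Ioi
          (hd y hy) (hi y hy) (fun x => f (x, y))
        rw [him y hy] at this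
        exact this.1 h1
      · refine hf.2.congr ?_
        filter_upwards [ae_restrict_mem measurableSet_Ioi] with y hy
        have := integral_image_eq_integral_abs_deriv_smul measurableSet_Ioi
          (hd y hy) (hi y hy) (fun x => ‖f (x, y)‖)
        rw [him y hy] at this
        rw [this]
        simp
    · have h1 : Measurable fun q : ℝ × ℝ => f (φ q.2 q.1, q.2) :=
        hm.comp (hφ.prodMk measurable_snd)
      have h2 : Measurable fun q : ℝ × ℝ => |φ' q.2 q.1| := by
        simpa [Real.norm_eq_abs] using hφ'.norm
      exact (h2.smul h1).aestronglyMeasurable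
  refine ⟨hI, ?_⟩
  rw [integral_prod_symm _ hI, integral_prod_symm _ hf]
  refine integral_congr_ae ?_
  filter_upwards [ae_restrict_mem measurableSet_Ioi] with y hy
  have := integral_image_eq_integral_abs_deriv_smul measurableSet_Ioi
    (hd y hy) (hi y hy) (fun x => f (x, y))
  rw [him y hy] at this
  exact this.symm

lemma mellinConv_exp_sub_one {b : ℂ} (h1 : -1 < b.re) (h2 : b.re < 0) :
    MellinConvergent (fun v : ℝ => Complex.exp (-v) - 1) b := by
  have hc : Continuous (fun v : ℝ => Complex.exp (-v) - 1) := by fun_prop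
  refine mellinConvergent_of_isBigO_rpow (a := 0) (b := -1)
    (hc.locallyIntegrable.locallyIntegrableOn _) ?_ h2 ?_ h1
  · refine Asymptotics.IsBigO.of_bound 2 ?_
    filter_upwards [eventually_ge_atTop 0] with v hv
    have : ‖Complex.exp (-v)‖ ≤ 1 := by
      rw [Complex.norm_exp]; simpa using hv
    calc _ ≤ _ := norm_sub_le _ _
      _ ≤ 2 := by simp; linarith
      _ = _ := by simp
  · refine Asymptotics.IsBigO.of_bound 1 ?_
    filter_upwards [self_mem_nhdsWithin] with v hv
    have hv : 0 < v := hv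
    have h3 : Complex.exp (-v) - 1 = ((Real.exp (-v) - 1 : ℝ) : ℂ) := by push_cast; rfl
    have h4 : Real.exp (-v) ≤ 1 := by simpa using hv.le
    have h5 := Real.add_one_le_exp (-v)
    rw [h3, Complex.norm_real, Real.norm_eq_abs, abs_of_nonpos (by linarith)]
    simp [abs_of_pos hv]
    linarith

lemma mellin_exp_sub_one {b : ℂ} (h1 : -1 < b.re) (h2 : b.re < 0) :
    ∫ v in Ioi (0 : ℝ), (v : ℂ) ^ (b - 1) * (Complex.exp (-v) - 1) = Complex.Gamma b := by
  have hb : b ≠ 0 := by rintro rfl; simp at h2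
  have hI1 : IntegrableOn (fun v : ℝ => (v : ℂ) ^ (b - 1) * (Complex.exp (-v) - 1)) (Ioi 0) :=
    mellinConv_exp_sub_one h1 h2
  have hI2 : IntegrableOn (fun v : ℝ => (v : ℂ) ^ b * Complex.exp (-v)) (Ioi 0) := by
    have := Complex.GammaIntegral_convergent (s := b + 1) (by simp; linarith)
    refine this.congr_fun (fun v _ => ?_) measurableSet_Ioi
    simp [mul_comm]
  have hbd : ∀ v : ℝ, 0 < v → ‖(v : ℂ) ^ b * (Complex.exp (-v) - 1)‖ ≤ v ^ b.re ∧
      ‖(v : ℂ) ^ b * (Complex.exp (-v) - 1)‖ ≤ v ^ (b.re + 1) := by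
    intro v hv
    have h3 : Complex.exp (-v) - 1 = ((Real.exp (-v) - 1 : ℝ) : ℂ) := by push_cast; rfl
    have h4 : Real.exp (-v) ≤ 1 := by simpa using hv.le
    have h5 := Real.add_one_le_exp (-v)
    have h6 := Real.exp_pos (-v)
    rw [norm_mul, Complex.norm_cpow_eq_rpow_re_of_pos hv, h3, Complex.norm_real,
      Real.norm_eq_abs, abs_of_nonpos (by linarith), Real.rpow_add hv, Real.rpow_one]
    have h7 := Real.rpow_pos_of_pos hv b.re
    constructor <;> nlinarith
  have key := integral_Ioi_of_hasDerivAt_of_tendsto (a := 0)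
    (f := fun v : ℝ => (v : ℂ) ^ b * (Complex.exp (-v) - 1))
    (f' := fun v : ℝ => b * ((v : ℂ) ^ (b - 1) * (Complex.exp (-v) - 1))
      - (v : ℂ) ^ b * Complex.exp (-v)) (m := 0) ?_ ?_ ?_ ?_
  · rw [integral_sub (hI1.const_mul b) hI2, integral_const_mul] at key
    have h3 : ∫ v in Ioi (0 : ℝ), (v : ℂ) ^ b * Complex.exp (-v) = Complex.Gamma (b + 1) := by
      rw [Complex.Gamma_eq_integral (by simp; linarith), Complex.GammaIntegral]
      refine setIntegral_congr_fun measurableSet_Ioi (fun v _ => ?_)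
      simp [mul_comm]
    rw [h3, Complex.Gamma_add_one _ hb] at key
    simp at key
    have : b * (∫ v in Ioi (0 : ℝ), (v : ℂ) ^ (b - 1) * (Complex.exp (-v) - 1))
      = b * Complex.Gamma b := by linear_combination key
    exact mul_left_cancel₀ hb this
  · rw [← continuousWithinAt_Ioi_iff_Ici]
    unfold ContinuousWithinAt
    simp only [Complex.ofReal_zero, neg_zero, Complex.exp_zero, sub_self, mul_zero]
    refine squeeze_zero_norm' (a := fun v => v ^ (b.re + 1)) ?_ ?_
    · filter_upwards [self_mem_nhdsWithin] with v hv using (hbd v hv).2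
    · have := (Real.continuousAt_rpow_const 0 (b.re + 1) (Or.inr (by linarith))).tendsto
      rw [Real.zero_rpow (by linarith)] at this
      exact this.mono_left nhdsWithin_le_nhds
  · intro v hv
    have hv : 0 < v := hv
    have e1 : HasDerivAt (fun v : ℝ => (v : ℂ) ^ b) (b * (v : ℂ) ^ (b - 1)) v := by
      simpa using hasDerivAt_ofReal_cpow_const (x := v) hv.ne' (r := b) hb
    have e2 : HasDerivAt (fun v : ℝ => Complex.exp (-v) - 1) (-Complex.exp (-v)) v := by
      have := ((Complex.ofRealCLM.hasDerivAt (x := v)).neg.cexp).sub_const 1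
      simpa using this
    refine (e1.mul e2).congr_deriv ?_
    ring
  · exact (hI1.const_mul b).sub hI2
  · refine squeeze_zero_norm' (a := fun v => v ^ (b.re)) ?_ ?_
    · filter_upwards [eventually_gt_atTop 0] with v hv using (hbd v hv).1
    · have := tendsto_rpow_neg_atTop (y := -b.re) (by linarith)
      simpa using this

lemma mellin_exp_sub_exp {a : ℂ} (h1 : -1 < a.re) (h2 : a.re < 0) {c : ℝ} (hc : 0 < c) :
    ∫ v in Ioi (0 : ℝ), (v : ℂ) ^ (a - 1) * (Complex.exp (-v) - Complex.exp (-(c * v))) =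
      Complex.Gamma a * (1 - (c : ℂ) ^ (-a)) := by
  have hC := mellinConv_exp_sub_one h1 h2
  have hC2 := (MellinConvergent.comp_mul_left hc).2 hC
  have e1 := mellin_exp_sub_one h1 h2
  have e2 := mellin_comp_mul_left (fun v : ℝ => Complex.exp (-v) - 1) a hc
  simp only [mellin, smul_eq_mul] at e2
  rw [e1] at e2
  have e3 := integral_sub hC hC2
  simp only [smul_eq_mul] at e3
  rw [e1, e2] at e3
  rw [mul_sub, mul_one, mul_comm (Complex.Gamma a), ← e3]
  refine setIntegral_congr_fun measurableSet_Ioi (fun v _ => ?_)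
  push_cast; ring

lemma exp_sub_bound {θ y : ℝ} (h0 : 0 ≤ θ) (h1 : θ ≤ 1) (hy : 0 < y) :
    1 - Real.exp (-y) ≤ y ^ θ := by
  have h4 : 0 < Real.exp (-y) := Real.exp_pos _
  have h5 := Real.add_one_le_exp (-y)
  rcases le_total y 1 with h | h
  · have := Real.rpow_le_rpow_of_exponent_ge hy h h1
    rw [Real.rpow_one] at this; linarith
  · have := Real.one_le_rpow h h0
    linarith

lemma gamma_real_int {r : ℝ} (hr : 0 < r) :
    Integrable (fun x : ℝ => x ^ (r - 1) * Real.exp (-x)) muP := by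
  have := Real.GammaIntegral_convergent hr
  refine this.congr_fun (fun v _ => ?_) measurableSet_Ioi
  simp [mul_comm]

lemma gamma_cplx_int {r : ℂ} (hr : 0 < r.re) :
    Integrable (fun x : ℝ => (x : ℂ) ^ (r - 1) * Complex.exp (-x)) muP := by
  have := Complex.GammaIntegral_convergent hr
  refine this.congr_fun (fun v _ => ?_) measurableSet_Ioi
  simp [mul_comm]

lemma gamma_cplx_eq {r : ℂ} (hr : 0 < r.re) :
    ∫ x in Ioi (0:ℝ), (x : ℂ) ^ (r - 1) * Complex.exp (-x) = Complex.Gamma r := by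
  rw [Complex.Gamma_eq_integral hr, Complex.GammaIntegral]
  refine setIntegral_congr_fun measurableSet_Ioi (fun v _ => ?_)
  simp [mul_comm]

lemma kint_integrable {p : ℝ} (hp : 0 < p) {w : ℂ} (hw : -1 < w.re) :
    IntegrableOn (fun B : ℝ => (B : ℂ) ^ (w - 1) * Complex.exp (-B - p ^ 2 / B)) (Ioi 0) := by
  have h := (gamma_real_int (r := w.re + 1) (by linarith)).const_mul (1 / p ^ 2)
  refine h.mono' (Measurable.aestronglyMeasurable (by fun_prop)) ?_
  filter_upwards [ae_restrict_mem measurableSet_Ioi] with B hB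
  have hB : 0 < B := hB
  have e : (-(B:ℂ) - p ^ 2 / B) = ((-B - p ^ 2 / B : ℝ) : ℂ) := by push_cast; rfl
  rw [norm_mul, Complex.norm_cpow_eq_rpow_re_of_pos hB, e, Complex.norm_exp, Complex.ofReal_re,
    Complex.sub_re, Complex.one_re, sub_eq_add_neg (-B), Real.exp_add, add_sub_cancel_right,
    Real.rpow_sub hB, Real.rpow_one]
  have h1 : Real.exp (-(p ^ 2 / B)) ≤ B / p ^ 2 := by
    rw [Real.exp_neg, inv_le_comm₀ (Real.exp_pos _) (by positivity), inv_div]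
    linarith [Real.add_one_le_exp (p ^ 2 / B)]
  calc _ ≤ B ^ w.re / B * (Real.exp (-B) * (B / p ^ 2)) := by gcongr
    _ = _ := by field_simp

lemma kint_eq {p : ℝ} (hp : 0 < p) {w : ℂ} (hw : -1 < w.re) :
    ∫ B in Ioi (0 : ℝ), (B : ℂ) ^ (w - 1) * Complex.exp (-B - p ^ 2 / B) =
      (p : ℂ) ^ w * (2 * macdonaldK w (2 * p)) := by
  have him : (fun t : ℝ => p * Real.exp t) '' univ = Ioi 0 := by
    ext y
    simp only [image_univ, mem_range, mem_Ioi]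
    constructor
    · rintro ⟨t, rfl⟩; positivity
    · intro hy
      exact ⟨Real.log (y / p), by rw [Real.exp_log (by positivity)]; field_simp⟩
  have hd : ∀ t ∈ (univ : Set ℝ), HasDerivWithinAt (fun t : ℝ => p * Real.exp t)
      (p * Real.exp t) univ t := fun t _ => ((Real.hasDerivAt_exp t).const_mul p).hasDerivWithinAt
  have hinj : InjOn (fun t : ℝ => p * Real.exp t) univ := by
    intro x _ y _ h
    exact Real.exp_injective (mul_left_cancel₀ hp.ne' h)
  have hpt : ∀ t : ℝ, |p * Real.exp t| • (((p * Real.exp t : ℝ) : ℂ) ^ (w - 1) *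
      Complex.exp (-((p * Real.exp t : ℝ) : ℂ) - p ^ 2 / ((p * Real.exp t : ℝ) : ℂ))) =
      (p : ℂ) ^ w * (Complex.exp (-((2 * p : ℝ) : ℂ) * Real.cosh t) * Complex.exp (w * t)) := by
    intro t
    have hq : (0:ℝ) < p * Real.exp t := by positivity
    have hq' : ((p * Real.exp t : ℝ) : ℂ) ≠ 0 := by exact_mod_cast hq.ne'
    rw [abs_of_pos hq, Complex.real_smul, Complex.cpow_sub _ _ hq', Complex.cpow_one,
      ← mul_assoc, mul_div_cancel₀ _ hq']
    have e1 : ((p * Real.exp t : ℝ) : ℂ) ^ w = (p : ℂ) ^ w * Complex.exp (w * t) := by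
      rw [Complex.ofReal_mul, Complex.mul_cpow_ofReal_nonneg hp.le (Real.exp_pos t).le]
      congr 1
      rw [Complex.cpow_def_of_ne_zero (by exact_mod_cast (Real.exp_pos t).ne'),
        ← Complex.ofReal_log (Real.exp_pos t).le, Real.log_exp, mul_comm]
    have e2 : (-((p * Real.exp t : ℝ) : ℂ) - p ^ 2 / ((p * Real.exp t : ℝ) : ℂ)) =
        -((2 * p : ℝ) : ℂ) * Real.cosh t := by
      have : -(p * Real.exp t) - p ^ 2 / (p * Real.exp t) = -(2 * p) * Real.cosh t := by
        rw [Real.cosh_eq, Real.exp_neg]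
        field_simp
        ring
      exact_mod_cast congrArg (fun x : ℝ => (x : ℂ)) this
    rw [e1, e2]; ring
  have hint := kint_integrable hp hw
  have h1 := (integrableOn_image_iff_integrableOn_abs_deriv_smul MeasurableSet.univ hd hinj
    (fun B : ℝ => (B : ℂ) ^ (w - 1) * Complex.exp (-B - p ^ 2 / B)))
  have h2 := (integral_image_eq_integral_abs_deriv_smul MeasurableSet.univ hd hinj
    (fun B : ℝ => (B : ℂ) ^ (w - 1) * Complex.exp (-B - p ^ 2 / B)))
  rw [him] at h1 h2
  simp only [hpt] at h1 h2
  rw [h2, integral_const_mul, Measure.restrict_univ]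
  congr 1
  have hp' : (p : ℂ) ^ w ≠ 0 := by
    rw [Ne, Complex.cpow_eq_zero_iff]; simp [hp.ne']
  have h3 : Integrable (fun t : ℝ => Complex.exp (-((2 * p : ℝ) : ℂ) * Real.cosh t) *
      Complex.exp (w * t)) := by
    have := (h1.1 hint).const_mul ((p : ℂ) ^ w)⁻¹
    rw [Measure.restrict_univ] at this
    refine this.congr (Eventually.of_forall fun t => ?_)
    simp only
    rw [inv_mul_cancel_left₀ hp']
  rw [← intervalIntegral.integral_Iic_add_Ioi (b := 0) h3.integrableOn h3.integrableOn,
    ← neg_zero, ← integral_comp_neg_Ioi, neg_zero, ← integral_add]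
  · rw [macdonaldK, ← integral_const_mul]
    refine setIntegral_congr_fun measurableSet_Ioi (fun t _ => ?_)
    simp only [Complex.cosh, Real.cosh_neg]
    push_cast
    rw [mul_neg]
    ring
  · exact h3.comp_neg.integrableOn
  · exact h3.integrableOn

/-- The basic three-variable integrand. -/
noncomputable def Phi (a b c : ℂ) (q : (ℝ × ℝ) × ℝ) : ℂ :=
  ((q.1.1 : ℂ) ^ (a - 1) * (q.1.2 : ℂ) ^ (b - 1)) * (q.2 : ℂ) ^ (c - 1) *
    (Complex.exp (-q.1.1) * Complex.exp (-q.1.2) * Complex.exp (-q.2)) *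
    (1 - Complex.exp (-(q.1.1 * q.1.2 / q.2)))

lemma Phi_measurable (a b c : ℂ) : Measurable (Phi a b c) := by
  unfold Phi
  fun_prop

lemma Phi_integrable {a b c : ℂ} (h1 : -1 < a.re) (h2 : a.re < 0) (hb : b.re = a.re)
    (hc : c.re = - 2 * a.re) : Integrable (Phi a b c) ((muP.prod muP).prod muP) := by
  obtain ⟨θ, h3, h4⟩ : ∃ θ, -a.re < θ ∧ θ < min 1 (-2 * a.re) :=
    exists_between (lt_min (by linarith) (by linarith))
  have h5 := h4.trans_le (min_le_left _ _)
  have h6 := h4.trans_le (min_le_right _ _)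
  have hA := gamma_real_int (r := a.re + θ) (by linarith)
  have hU := gamma_real_int (r := c.re - θ) (by linarith)
  have h := (hA.mul_prod hA).mul_prod hU
  refine h.mono' (Phi_measurable a b c).aestronglyMeasurable ?_
  have hpos : ∀ᵐ q ∂((muP.prod muP).prod muP), (0 < q.1.1 ∧ 0 < q.1.2) ∧ 0 < q.2 := by
    rw [Measure.prod_restrict, Measure.prod_restrict]
    filter_upwards [ae_restrict_mem ((measurableSet_Ioi.prod measurableSet_Ioi).prod
      measurableSet_Ioi)] with q hq
    exact hq
  filter_upwards [hpos] with q hq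
  obtain ⟨⟨A, B⟩, u⟩ := q
  obtain ⟨⟨hA, hB⟩, hu⟩ := hq
  simp only at hA hB hu
  have e : (1 - Complex.exp (-((A : ℂ) * B / u))) = ((1 - Real.exp (-(A * B / u)) : ℝ) : ℂ) := by
    push_cast; rfl
  have hy : 0 < A * B / u := by positivity
  have h7 := exp_sub_bound (θ := θ) (by linarith) h5.le hy
  have h8 : 0 ≤ 1 - Real.exp (-(A * B / u)) := by
    have : Real.exp (-(A * B / u)) ≤ 1 := by simpa using hy.le
    linarith
  simp only [Phi, norm_mul]
  rw [e, Complex.norm_real, Real.norm_eq_abs, abs_of_nonneg h8,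
    Complex.norm_cpow_eq_rpow_re_of_pos hA, Complex.norm_cpow_eq_rpow_re_of_pos hB,
    Complex.norm_cpow_eq_rpow_re_of_pos hu, Complex.norm_exp, Complex.norm_exp, Complex.norm_exp]
  simp only [Complex.sub_re, Complex.one_re, Complex.neg_re, Complex.ofReal_re]
  rw [Real.div_rpow (by positivity) hu.le, Real.mul_rpow hA.le hB.le] at h7
  calc _ ≤ A ^ (a.re - 1) * B ^ (b.re - 1) * u ^ (c.re - 1) *
      (Real.exp (-A) * Real.exp (-B) * Real.exp (-u)) * (A ^ θ * B ^ θ / u ^ θ) := by gcongr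
    _ = _ := by
      rw [hb, show a.re + θ - 1 = (a.re - 1) + θ by ring, Real.rpow_add hA, Real.rpow_add hB,
        show c.re - θ - 1 = (c.re - 1) - θ by ring, Real.rpow_sub hu (c.re - 1) θ]
      ring

lemma cpow_combine {u k : ℝ} (hu : 0 < u) (hk : 0 < k) (a b c : ℂ) (hc : c = -a - b) :
    (u : ℂ) * (((u * k : ℝ) : ℂ) ^ (b - 1) * (u : ℂ) ^ (c - 1)) =
      (k : ℂ) ^ (b - 1) * (u : ℂ) ^ (-a - 1) := by
  have hu' : (u : ℂ) ≠ 0 := by exact_mod_cast hu.ne'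
  rw [Complex.ofReal_mul, Complex.mul_cpow_ofReal_nonneg hu.le hk.le]
  have : (u : ℂ) ^ (-a - 1) = u * ((u : ℂ) ^ (b - 1) * (u : ℂ) ^ (c - 1)) := by
    rw [← Complex.cpow_add _ _ hu']
    nth_rewrite 2 [← Complex.cpow_one (u : ℂ)]
    rw [← Complex.cpow_add _ _ hu', hc]
    congr 1; ring
  rw [this]; ring

lemma two_dim_eq {a b c : ℂ} (h1 : -1 < a.re) (h2 : a.re < 0) (hb : b.re = a.re)
    (hc : c = -a - b) (C : ℂ)
    (hF : Integrable (fun q : ℝ × ℝ => C * ((q.1 : ℂ) ^ (b - 1) * (q.2 : ℂ) ^ (c - 1) *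
      (Complex.exp (-q.1) * Complex.exp (-q.2)) * (1 - (1 + (q.1 / q.2 : ℂ)) ^ (-a))))
      (muP.prod muP)) :
    ∫ q : ℝ × ℝ, C * ((q.1 : ℂ) ^ (b - 1) * (q.2 : ℂ) ^ (c - 1) *
      (Complex.exp (-q.1) * Complex.exp (-q.2)) * (1 - (1 + (q.1 / q.2 : ℂ)) ^ (-a)))
      ∂(muP.prod muP) = C * (Complex.Gamma b * Complex.Gamma c) := by
  have hcre : 0 < c.re := by rw [hc]; simp; linarith
  have hG : Integrable (fun q : ℝ × ℝ => C * (((q.1 : ℂ) ^ (b - 1) * (Complex.exp (-q.1) - 1)) *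
      ((q.2 : ℂ) ^ (c - 1) * Complex.exp (-q.2)))) (muP.prod muP) :=
    (Integrable.mul_prod (mellinConv_exp_sub_one (b := b) (by linarith) (by linarith))
      (gamma_cplx_int hcre)).const_mul C
  have hGv : ∫ q : ℝ × ℝ, C * (((q.1 : ℂ) ^ (b - 1) * (Complex.exp (-q.1) - 1)) *
      ((q.2 : ℂ) ^ (c - 1) * Complex.exp (-q.2))) ∂(muP.prod muP) =
      C * (Complex.Gamma b * Complex.Gamma c) := by
    rw [integral_const_mul]
    congr 1
    have := integral_prod_mul (μ := muP) (ν := muP)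
      (fun x : ℝ => (x : ℂ) ^ (b - 1) * (Complex.exp (-x) - 1))
      (fun x : ℝ => (x : ℂ) ^ (c - 1) * Complex.exp (-x))
    rw [this, mellin_exp_sub_one (by linarith) (by linarith), gamma_cplx_eq hcre]
  rw [← hGv]
  have him : ∀ y : ℝ, 0 < y → (fun k => y * k) '' Ioi (0:ℝ) = Ioi 0 := by
    intro y hy
    ext x
    simp only [mem_image, mem_Ioi]
    constructor
    · rintro ⟨k, hk, rfl⟩; positivity
    · intro hx; exact ⟨x / y, by positivity, by field_simp⟩
  have hd : ∀ y : ℝ, 0 < y → ∀ x ∈ Ioi (0:ℝ), HasDerivWithinAt (fun k => y * k) y (Ioi 0) x := by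
    intro y hy x _
    simpa using ((hasDerivAt_id x).const_mul y).hasDerivWithinAt
  have hi : ∀ y : ℝ, 0 < y → InjOn (fun k => y * k) (Ioi (0:ℝ)) := by
    intro y hy x _ x' _ h
    exact mul_left_cancel₀ hy.ne' h
  obtain ⟨f1, f2⟩ := subst_prod _ (by fun_prop) hF (fun y k => y * k) (fun y _ => y)
    (by fun_prop) (by fun_prop) hd hi him
  obtain ⟨g1, g2⟩ := subst_prod _ (by fun_prop) hG (fun y k => y * k) (fun y _ => y)
    (by fun_prop) (by fun_prop) hd hi him
  rw [← f2, ← g2, integral_prod _ f1, integral_prod _ g1]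
  refine setIntegral_congr_fun measurableSet_Ioi (fun k hk => ?_)
  have hk : 0 < k := hk
  have hk1 : (1 + k : ℂ) ≠ 0 := by
    have : (1 + k : ℝ) ≠ 0 := by positivity
    exact_mod_cast this
  have hre : 0 < (-a).re := by simp; linarith
  have i1 : ∫ u in Ioi (0:ℝ), (u : ℂ) ^ (-a - 1) * Complex.exp (-((1 + k : ℂ) * u)) =
      (1 + k : ℂ) ^ a * Complex.Gamma (-a) := by
    have : (1 + k : ℂ) = ((1 + k : ℝ) : ℂ) := by push_cast; rfl
    rw [this, Complex.integral_cpow_mul_exp_neg_mul_Ioi hre (by linarith), one_div,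
      Complex.inv_cpow, Complex.cpow_neg, inv_inv]
    rw [Complex.arg_ofReal_of_nonneg (by linarith)]
    exact Real.pi_ne_zero.symm
  have i1' : Integrable (fun u : ℝ => (u : ℂ) ^ (-a - 1) * Complex.exp (-((1 + k : ℂ) * u)))
      muP := by
    have := (MellinConvergent.comp_mul_left (f := fun u : ℝ => Complex.exp (-u)) (s := -a)
      (a := 1 + k) (by linarith)).2 (gamma_cplx_int hre)
    simpa [MellinConvergent, IntegrableOn] using this
  have i2 := gamma_cplx_eq hre
  have i2' := gamma_cplx_int hre
  have L : ∫ u in Ioi (0:ℝ), |u| • (C * (((u * k : ℝ) : ℂ) ^ (b - 1) * (u : ℂ) ^ (c - 1) *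
      (Complex.exp (-((u * k : ℝ) : ℂ)) * Complex.exp (-u)) *
      (1 - (1 + (((u * k : ℝ) : ℂ) / u : ℂ)) ^ (-a)))) =
      ∫ u in Ioi (0:ℝ), (C * (k : ℂ) ^ (b - 1) * (1 - (1 + k : ℂ) ^ (-a))) *
        ((u : ℂ) ^ (-a - 1) * Complex.exp (-((1 + k : ℂ) * u))) := by
    refine setIntegral_congr_fun measurableSet_Ioi (fun u hu => ?_)
    have hu : 0 < u := hu
    have hu' : (u : ℂ) ≠ 0 := by exact_mod_cast hu.ne'
    have e1 : ((u * k : ℝ) : ℂ) / u = k := by push_cast; field_simp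
    have e2 : Complex.exp (-((1 + k : ℂ) * u)) =
        Complex.exp (-((u * k : ℝ) : ℂ)) * Complex.exp (-u) := by
      rw [← Complex.exp_add]; push_cast; ring_nf
    simp only [e1, e2, abs_of_pos hu, Complex.real_smul]
    linear_combination (C * (Complex.exp (-((u * k : ℝ) : ℂ)) * Complex.exp (-u)) *
      (1 - (1 + k : ℂ) ^ (-a))) * cpow_combine hu hk a b c hc
  have R : ∫ u in Ioi (0:ℝ), |u| • (C * ((((u * k : ℝ) : ℂ) ^ (b - 1) *
      (Complex.exp (-((u * k : ℝ) : ℂ)) - 1)) * ((u : ℂ) ^ (c - 1) * Complex.exp (-u)))) =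
      ∫ u in Ioi (0:ℝ), (C * (k : ℂ) ^ (b - 1)) *
        ((u : ℂ) ^ (-a - 1) * Complex.exp (-((1 + k : ℂ) * u)) -
        (u : ℂ) ^ (-a - 1) * Complex.exp (-u)) := by
    refine setIntegral_congr_fun measurableSet_Ioi (fun u hu => ?_)
    have hu : 0 < u := hu
    have e2 : Complex.exp (-((1 + k : ℂ) * u)) =
        Complex.exp (-((u * k : ℝ) : ℂ)) * Complex.exp (-u) := by
      rw [← Complex.exp_add]; push_cast; ring_nf
    simp only [e2, abs_of_pos hu, Complex.real_smul]
    linear_combination (C * (Complex.exp (-((u * k : ℝ) : ℂ)) - 1) * Complex.exp (-u)) *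
      cpow_combine hu hk a b c hc
  refine L.trans (Eq.trans ?_ R.symm)
  rw [integral_const_mul, integral_const_mul, integral_sub i1' i2', i1, i2, Complex.cpow_neg]
  have : (1 + k : ℂ) ^ a ≠ 0 := by
    rw [Ne, Complex.cpow_eq_zero_iff]; tauto
  field_simp

lemma Phi_inner {a : ℂ} (b c : ℂ) (h1 : -1 < a.re) (h2 : a.re < 0) {B u : ℝ} (hB : 0 < B)
    (hu : 0 < u) :
    ∫ A in Ioi (0:ℝ), Phi a b c ((A, B), u) =
      Complex.Gamma a * ((B : ℂ) ^ (b - 1) * (u : ℂ) ^ (c - 1) *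
      (Complex.exp (-B) * Complex.exp (-u)) * (1 - (1 + (B / u : ℂ)) ^ (-a))) := by
  have h := mellin_exp_sub_exp h1 h2 (c := 1 + B / u) (by positivity)
  push_cast at h
  have : ∫ A in Ioi (0:ℝ), Phi a b c ((A, B), u) = ∫ A in Ioi (0:ℝ),
      ((B : ℂ) ^ (b - 1) * (u : ℂ) ^ (c - 1) * (Complex.exp (-B) * Complex.exp (-u))) *
      ((A : ℂ) ^ (a - 1) * (Complex.exp (-A) - Complex.exp (-((1 + B / u) * A)))) := by
    refine setIntegral_congr_fun measurableSet_Ioi (fun A _ => ?_)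
    have e : Complex.exp (-((1 + B / u) * A)) =
        Complex.exp (-A) * Complex.exp (-(A * B / u)) := by
      rw [← Complex.exp_add]; ring_nf
    simp only [Phi, e]
    ring
  rw [this, integral_const_mul, h]
  ring

lemma Phi_value {a b c : ℂ} (h1 : -1 < a.re) (h2 : a.re < 0) (hb : b.re = a.re)
    (hc : c = -a - b) : ∫ q, Phi a b c q ∂((muP.prod muP).prod muP) =
      Complex.Gamma a * (Complex.Gamma b * Complex.Gamma c) := by
  have hI := Phi_integrable (c := c) h1 h2 hb (by rw [hc]; simp; linarith)
  have mp := measurePreserving_prodAssoc muP muP muP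
  have hI' : Integrable (fun q : ℝ × ℝ × ℝ => Phi a b c ((q.1, q.2.1), q.2.2))
      (muP.prod (muP.prod muP)) := by
    rw [← mp.integrable_comp_emb MeasurableEquiv.prodAssoc.measurableEmbedding]
    exact hI
  have e := mp.integral_comp MeasurableEquiv.prodAssoc.measurableEmbedding
    (fun q : ℝ × ℝ × ℝ => Phi a b c ((q.1, q.2.1), q.2.2))
  have e' : ∫ q, Phi a b c q ∂((muP.prod muP).prod muP) =
    ∫ q : ℝ × ℝ × ℝ, Phi a b c ((q.1, q.2.1), q.2.2) ∂(muP.prod (muP.prod muP)) := e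
  have hae : (fun q : ℝ × ℝ => ∫ A in Ioi (0:ℝ), Phi a b c ((A, q.1), q.2)) =ᵐ[muP.prod muP]
      fun q : ℝ × ℝ => Complex.Gamma a * ((q.1 : ℂ) ^ (b - 1) * (q.2 : ℂ) ^ (c - 1) *
      (Complex.exp (-q.1) * Complex.exp (-q.2)) * (1 - (1 + (q.1 / q.2 : ℂ)) ^ (-a))) := by
    filter_upwards [ae_prod_pos] with q hq
    exact Phi_inner b c h1 h2 hq.1 hq.2
  rw [e', integral_prod_symm _ hI', integral_congr_ae hae]
  exact two_dim_eq h1 h2 hb hc _ (hI'.integral_prod_right.congr hae)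

lemma Phi_sub {a b c : ℂ} (hab : -1 < (b - a).re) (hc : 0 < c.re) {x B : ℝ} (hx : 0 < x)
    (hB : 0 < B) :
    |x / (2 * B)| • ∫ u in Ioi (0:ℝ), Phi a b c ((x ^ 2 / (4 * B), B), u) =
    ((x : ℂ) / 2) ^ (2 * a - 1) * (Complex.Gamma c - (x / 2 : ℂ) ^ c * (2 * macdonaldK c x)) *
    ((B : ℂ) ^ (b - a - 1) * Complex.exp (-B - ((x / 2 : ℝ) : ℂ) ^ 2 / B)) := by
  have hp : 0 < x / 2 := by positivity
  have hB' : (B : ℂ) ≠ 0 := by exact_mod_cast hB.ne'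
  have hp' : ((x / 2 : ℝ) : ℂ) ≠ 0 := by exact_mod_cast hp.ne'
  have k := kint_eq (w := c) hp (by linarith)
  have ki := kint_integrable (w := c) hp (by linarith)
  have g := gamma_cplx_eq hc
  have gi := gamma_cplx_int hc
  have e0 : ((x ^ 2 / (4 * B) : ℝ) : ℂ) = ((x / 2 : ℝ) : ℂ) ^ 2 / B := by
    push_cast; field_simp; norm_num
  have : ∫ u in Ioi (0:ℝ), Phi a b c ((x ^ 2 / (4 * B), B), u) = ∫ u in Ioi (0:ℝ),
      (((x ^ 2 / (4 * B) : ℝ) : ℂ) ^ (a - 1) * (B : ℂ) ^ (b - 1) *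
        Complex.exp (-B - ((x / 2 : ℝ) : ℂ) ^ 2 / B)) *
      ((u : ℂ) ^ (c - 1) * Complex.exp (-u) -
        (u : ℂ) ^ (c - 1) * Complex.exp (-u - ((x / 2 : ℝ) : ℂ) ^ 2 / u)) := by
    refine setIntegral_congr_fun measurableSet_Ioi (fun u _ => ?_)
    have e1 : ((x ^ 2 / (4 * B) : ℝ) : ℂ) * B / u = ((x / 2 : ℝ) : ℂ) ^ 2 / u := by
      rw [e0]; field_simp
    simp only [Phi, e1, sub_eq_add_neg (-(u : ℂ)), sub_eq_add_neg (-(B : ℂ)), Complex.exp_add, ← e0]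
    ring
  rw [this, integral_const_mul, integral_sub gi ki, g, k, abs_of_pos (by positivity),
    Complex.real_smul, show 2 * (x / 2) = x by ring]
  have e2 : ((x ^ 2 / (4 * B) : ℝ) : ℂ) ^ (a - 1) =
      ((x / 2 : ℝ) : ℂ) ^ (2 * a - 1) * ((x / 2 : ℝ) : ℂ)⁻¹ * ((B : ℂ) ^ (a - 1))⁻¹ := by
    have : x ^ 2 / (4 * B) = (x / 2) * (x / 2) * B⁻¹ := by field_simp; norm_num
    rw [this, Complex.ofReal_mul, Complex.mul_cpow_ofReal_nonneg (by positivity) (by positivity),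
      Complex.ofReal_mul, Complex.mul_cpow_ofReal_nonneg (by positivity) (by positivity),
      Complex.ofReal_inv, Complex.inv_cpow, ← Complex.cpow_add _ _ hp',
      ← Complex.cpow_neg_one ((x / 2 : ℝ) : ℂ), ← Complex.cpow_add _ _ hp']
    · congr 2; ring
    · rw [Complex.arg_ofReal_of_nonneg hB.le]; exact Real.pi_ne_zero.symm
  have e3 : (B : ℂ) ^ (b - a - 1) = (B : ℂ) ^ (b - 1) * ((B : ℂ) ^ (a - 1))⁻¹ * (B : ℂ)⁻¹ := by
    rw [← Complex.cpow_neg, ← Complex.cpow_neg_one, ← Complex.cpow_add _ _ hB',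
      ← Complex.cpow_add _ _ hB']
    congr 1; ring
  have e4 : ((x / (2 * B) : ℝ) : ℂ) = ((x / 2 : ℝ) : ℂ) * (B : ℂ)⁻¹ := by
    push_cast; field_simp
  have e5 : ((x : ℂ) / 2) = ((x / 2 : ℝ) : ℂ) := by push_cast; rfl
  rw [e2, e3, e4, e5]
  field_simp

lemma macdonaldK_neg (w : ℂ) (y : ℝ) : macdonaldK (-w) y = macdonaldK w y := by
  simp [macdonaldK]

/-- For every `z ∈ ℂ` with `−1 < Re z < 0` and every real `s`,
`Γ(z+is)Γ(z−is) = 4 ∫_0^∞ (x/2)^{2z} K_{2is}(x)(1 + (2/x)^{2z}(4z/Γ(1−2z))K_{2z}(x))(1/x) dx`,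
the integral converging absolutely. -/
theorem stmt9 (z : ℂ) (hz1 : -1 < z.re) (hz2 : z.re < 0) (s : ℝ) :
    IntegrableOn
      (fun x : ℝ =>
        ((x : ℂ) / 2) ^ (2 * z) * macdonaldK (2 * Complex.I * (s : ℂ)) x *
          (1 + (2 / (x : ℂ)) ^ (2 * z) * (4 * z / Complex.Gamma (1 - 2 * z)) *
            macdonaldK (2 * z) x) * (1 / (x : ℂ)))
      (Set.Ioi (0 : ℝ)) ∧
    Complex.Gamma (z + Complex.I * (s : ℂ)) * Complex.Gamma (z - Complex.I * (s : ℂ))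
      = 4 * ∫ x in Set.Ioi (0 : ℝ),
          ((x : ℂ) / 2) ^ (2 * z) * macdonaldK (2 * Complex.I * (s : ℂ)) x *
            (1 + (2 / (x : ℂ)) ^ (2 * z) * (4 * z / Complex.Gamma (1 - 2 * z)) *
              macdonaldK (2 * z) x) * (1 / (x : ℂ)) := by
  set a : ℂ := z + Complex.I * s with ha
  set b : ℂ := z - Complex.I * s with hb
  set c : ℂ := -2 * z with hc
  have hz : z ≠ 0 := by rintro rfl; simp at hz2
  have h1 : -1 < a.re := by simpa [ha] using hz1
  have h2 : a.re < 0 := by simpa [ha] using hz2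
  have hba : b.re = a.re := by simp [ha, hb]
  have hcab : c = -a - b := by rw [ha, hb, hc]; ring
  have hcre : c.re = -2 * a.re := by rw [hcab]; simp; linarith
  have hcpos : 0 < c.re := by linarith
  have hc0 : c ≠ 0 := by simp [hc, hz]
  have hG : Complex.Gamma c ≠ 0 := Complex.Gamma_ne_zero_of_re_pos hcpos
  have hI := Phi_integrable h1 h2 hba hcre
  have hV := Phi_value h1 h2 hba hcab
  rw [integral_prod _ hI] at hV
  have hΨ := hI.integral_prod_left
  have hm : Measurable (fun q : ℝ × ℝ => ∫ u in Ioi (0:ℝ), Phi a b c (q, u)) :=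
    ((Phi_measurable a b c).stronglyMeasurable.integral_prod_right').measurable
  have him : ∀ y : ℝ, 0 < y → (fun x => x ^ 2 / (4 * y)) '' Ioi (0:ℝ) = Ioi 0 := by
    intro y hy
    ext x
    simp only [mem_image, mem_Ioi]
    constructor
    · rintro ⟨k, hk, rfl⟩; positivity
    · intro hx
      refine ⟨Real.sqrt (4 * y * x), by positivity, ?_⟩
      rw [Real.sq_sqrt (by positivity)]; field_simp
  have hd : ∀ y : ℝ, 0 < y → ∀ x ∈ Ioi (0:ℝ),
      HasDerivWithinAt (fun x => x ^ 2 / (4 * y)) (x / (2 * y)) (Ioi 0) x := by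
    intro y hy x _
    have := ((hasDerivAt_pow 2 x).div_const (4 * y)).hasDerivWithinAt (s := Ioi 0)
    refine this.congr_deriv ?_
    field_simp; norm_num; ring
  have hi : ∀ y : ℝ, 0 < y → InjOn (fun x => x ^ 2 / (4 * y)) (Ioi (0:ℝ)) := by
    intro y hy x hx x' hx' h
    have h : x ^ 2 / (4 * y) = x' ^ 2 / (4 * y) := h
    rw [div_left_inj' (by positivity)] at h
    exact (pow_left_inj₀ (le_of_lt hx) (le_of_lt hx') two_ne_zero).1 h
  obtain ⟨f1, f2⟩ := subst_prod _ hm hΨ (fun y x => x ^ 2 / (4 * y)) (fun y x => x / (2 * y))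
    (by fun_prop) (by fun_prop) hd hi him
  have hpt : ∀ x ∈ Ioi (0:ℝ), ∫ B in Ioi (0:ℝ), |x / (2 * B)| •
      ∫ u in Ioi (0:ℝ), Phi a b c ((x ^ 2 / (4 * B), B), u) =
      (4 * Complex.Gamma c) * (((x : ℂ) / 2) ^ (2 * z) * macdonaldK (2 * Complex.I * (s : ℂ)) x *
            (1 + (2 / (x : ℂ)) ^ (2 * z) * (4 * z / Complex.Gamma (1 - 2 * z)) *
              macdonaldK (2 * z) x) * (1 / (x : ℂ))) := by
    intro x hx
    have hx : 0 < x := hx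
    have hp : 0 < x / 2 := by positivity
    have hp' : ((x / 2 : ℝ) : ℂ) ≠ 0 := by exact_mod_cast hp.ne'
    have hx' : (x : ℂ) ≠ 0 := by exact_mod_cast hx.ne'
    have hw : -1 < (b - a).re := by simp [hba]
    rw [setIntegral_congr_fun measurableSet_Ioi (fun B hB => Phi_sub hw hcpos hx hB),
      integral_const_mul, kint_eq hp hw, show 2 * (x / 2) = x by ring,
      show b - a = -(2 * Complex.I * s) by rw [ha, hb]; ring, macdonaldK_neg,
      show 2 * z = -c by rw [hc]; ring, macdonaldK_neg, sub_neg_eq_add, add_comm 1 c,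
      Complex.Gamma_add_one _ hc0]
    have e5 : ((x : ℂ) / 2) = ((x / 2 : ℝ) : ℂ) := by push_cast; rfl
    have e6 : (2 / (x : ℂ)) ^ (-c) = ((x / 2 : ℝ) : ℂ) ^ c := by
      rw [show (2 / (x : ℂ)) = ((x / 2 : ℝ) : ℂ)⁻¹ by push_cast; field_simp, Complex.inv_cpow,
        Complex.cpow_neg, inv_inv]
      rw [Complex.arg_ofReal_of_nonneg hp.le]; exact Real.pi_ne_zero.symm
    have e7 : ((x / 2 : ℝ) : ℂ) ^ (2 * a - 1) * ((x / 2 : ℝ) : ℂ) ^ (-(2 * Complex.I * s)) =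
        ((x / 2 : ℝ) : ℂ) ^ (-c) * (2 * (1 / x)) := by
      rw [← Complex.cpow_add _ _ hp', show 2 * a - 1 + -(2 * Complex.I * s) = -c - 1 by
        rw [ha, hc]; ring, Complex.cpow_sub _ _ hp', Complex.cpow_one]
      push_cast; field_simp
    have e8 : 4 * z = -2 * c := by rw [hc]; ring
    rw [e6, e5, e8]
    calc _ = (((x / 2 : ℝ) : ℂ) ^ (2 * a - 1) * ((x / 2 : ℝ) : ℂ) ^ (-(2 * Complex.I * s))) *
        (2 * macdonaldK (2 * Complex.I * s) x *
          (Complex.Gamma c - ((x / 2 : ℝ) : ℂ) ^ c * (2 * macdonaldK c x))) := by ring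
      _ = _ := by
        rw [e7]; field_simp; ring
  have hint := f1.integral_prod_left
  have hint' : IntegrableOn (fun x : ℝ => ∫ B in Ioi (0:ℝ), |x / (2 * B)| •
      ∫ u in Ioi (0:ℝ), Phi a b c ((x ^ 2 / (4 * B), B), u)) (Ioi 0) := hint
  rw [integral_prod _ f1, hV] at f2
  have f2' : ∫ x in Ioi (0:ℝ), ∫ B in Ioi (0:ℝ), |x / (2 * B)| •
      ∫ u in Ioi (0:ℝ), Phi a b c ((x ^ 2 / (4 * B), B), u) =
      Complex.Gamma a * (Complex.Gamma b * Complex.Gamma c) := f2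
  have hint2 := hint'.congr_fun hpt measurableSet_Ioi
  rw [setIntegral_congr_fun measurableSet_Ioi hpt, integral_const_mul] at f2'
  constructor
  · have := hint2.const_mul (4 * Complex.Gamma c)⁻¹
    refine IntegrableOn.congr_fun this (fun x _ => ?_) measurableSet_Ioi
    rw [inv_mul_cancel_left₀ (mul_ne_zero (by norm_num) hG)]
  · apply mul_right_cancel₀ hG
    linear_combination -f2'
end

section
/- For every complex number z with Re(z) > 0 and every real s, one has Γ(z+is) Γ(z−is) = 4 ∫_0^∞ (x/2)^{2z} K_{2is}(x) · (1/x) dx, where the integral converges absolutely. -/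
open MeasureTheory

lemma aux_cpow (x : ℝ) (hx : 0 < x) (a : ℂ) :
    (x : ℂ) ^ a = Complex.exp ((Real.log x : ℝ) * a) := by
  rw [Complex.cpow_def_of_ne_zero (by exact_mod_cast hx.ne'), Complex.ofReal_log hx.le]

noncomputable def bG (z : ℂ) (s : ℝ) (t : ℝ) : ℂ :=
  Complex.exp (-(2 * z) * (Real.log (2 * Real.cosh t) : ℝ) + 2 * Complex.I * s * t)

lemma sigmoid_eq (t : ℝ) : Real.sigmoid (2 * t) = Real.exp (t - Real.log (2 * Real.cosh t)) := by
  have hc : 0 < 2 * Real.cosh t := by have := Real.cosh_pos t; positivity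
  rw [Real.exp_sub, Real.exp_log hc, Real.sigmoid_def, Real.cosh_eq,
    show -(2 * t) = -t + -t by ring, Real.exp_add, Real.exp_neg]
  have := Real.exp_pos t
  field_simp

lemma one_sub_sigmoid_eq (t : ℝ) :
    1 - Real.sigmoid (2 * t) = Real.exp (-t - Real.log (2 * Real.cosh t)) := by
  rw [← Real.sigmoid_neg, show -(2 * t) = 2 * (-t) by ring, sigmoid_eq, Real.cosh_neg]

lemma bG_key (z : ℂ) (s t : ℝ) :
    |2 * (Real.sigmoid (2 * t) * (1 - Real.sigmoid (2 * t)))| •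
      (((Real.sigmoid (2 * t) : ℝ) : ℂ) ^ (z + Complex.I * s - 1) *
        (1 - ((Real.sigmoid (2 * t) : ℝ) : ℂ)) ^ (z - Complex.I * s - 1)) = 2 * bG z s t := by
  have h1 : (1 : ℂ) - ((Real.sigmoid (2 * t) : ℝ) : ℂ) =
    ((1 - Real.sigmoid (2 * t) : ℝ) : ℂ) := by push_cast; rfl
  rw [h1, one_sub_sigmoid_eq, sigmoid_eq, abs_of_pos (by positivity),
    aux_cpow _ (Real.exp_pos _), aux_cpow _ (Real.exp_pos _), Real.log_exp, Real.log_exp,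
    Complex.real_smul, bG]
  push_cast
  rw [mul_assoc, ← Complex.exp_add, ← Complex.exp_add, ← Complex.exp_add]
  congr 2
  ring

lemma sigmoid_image : (fun t : ℝ => Real.sigmoid (2 * t)) '' Set.univ = Set.Ioo 0 1 := by
  rw [Set.image_univ, ← Real.range_sigmoid]
  ext y
  constructor
  · rintro ⟨t, rfl⟩; exact ⟨2 * t, rfl⟩
  · rintro ⟨t, rfl⟩; exact ⟨t / 2, by simp only; congr 1; ring⟩

lemma sigmoid_deriv (t : ℝ) : HasDerivWithinAt (fun t : ℝ => Real.sigmoid (2 * t))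
    (2 * (Real.sigmoid (2 * t) * (1 - Real.sigmoid (2 * t)))) Set.univ t := by
  have h := (Real.hasDerivAt_sigmoid (2 * t)).comp t ((hasDerivAt_id t).const_mul 2)
  refine (h.hasDerivWithinAt).congr_deriv ?_
  ring

lemma sigmoid_injOn : Set.InjOn (fun t : ℝ => Real.sigmoid (2 * t)) Set.univ := by
  intro a _ b _ h
  have := Real.sigmoid_injective h
  linarith

lemma bG_integrable (z : ℂ) (hz : 0 < z.re) (s : ℝ) : Integrable (bG z s) := by
  have h := Complex.betaIntegral_convergent (u := z + Complex.I * s) (v := z - Complex.I * s)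
    (by simpa using hz) (by simpa using hz)
  rw [intervalIntegrable_iff_integrableOn_Ioo_of_le zero_le_one, ← sigmoid_image,
    integrableOn_image_iff_integrableOn_abs_deriv_smul MeasurableSet.univ
      (fun x _ => sigmoid_deriv x) sigmoid_injOn] at h
  simp only [bG_key] at h
  rw [integrableOn_univ] at h
  have h2 := h.const_mul (1 / 2)
  refine h2.congr (Filter.Eventually.of_forall fun t => ?_)
  simp only
  ring

lemma bG_integral (z : ℂ) (s : ℝ) :
    Complex.betaIntegral (z + Complex.I * s) (z - Complex.I * s) = 2 * ∫ t, bG z s t := by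
  rw [Complex.betaIntegral, intervalIntegral.integral_of_le zero_le_one,
    integral_Ioc_eq_integral_Ioo, ← sigmoid_image,
    integral_image_eq_integral_abs_deriv_smul MeasurableSet.univ
      (fun x _ => sigmoid_deriv x) sigmoid_injOn]
  simp only [bG_key]
  rw [Measure.restrict_univ, integral_const_mul]

lemma bG_half (z : ℂ) (hz : 0 < z.re) (s : ℝ) :
    ∫ t, bG z s t = 2 * ∫ t in Set.Ioi (0 : ℝ),
      Complex.exp (-(2 * z) * (Real.log (2 * Real.cosh t) : ℝ)) *
        Complex.cosh (2 * Complex.I * s * t) := by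
  have hi := bG_integrable z hz s
  have hi' : Integrable fun t => bG z s (-t) := hi.comp_neg
  rw [← intervalIntegral.integral_Iic_add_Ioi (b := 0) hi.integrableOn hi.integrableOn]
  have := integral_comp_neg_Ioi 0 (bG z s)
  rw [neg_zero] at this
  rw [← this, ← integral_add hi'.integrableOn hi.integrableOn, ← integral_const_mul]
  congr 1
  ext t
  rw [bG, bG, Real.cosh_neg, Complex.exp_add, Complex.exp_add, Complex.cosh]
  push_cast
  rw [show 2 * Complex.I * s * -(t : ℂ) = -(2 * Complex.I * s * t) by ring]
  ring

noncomputable def FF (z : ℂ) (s : ℝ) (x t : ℝ) : ℂ :=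
  ((x : ℂ) / 2) ^ (2 * z) *
    (Complex.exp (-(x : ℂ) * Real.cosh t) * Complex.cosh (2 * Complex.I * s * t)) * (1 / (x : ℂ))

lemma FF_eq (z : ℂ) (s x t : ℝ) (hx : 0 < x) :
    FF z s x t = ((2 : ℂ) ^ (-(2 * z)) * Complex.cosh (2 * Complex.I * s * t)) *
      ((x : ℂ) ^ (2 * z - 1) * Complex.exp (-((Real.cosh t : ℝ) * (x : ℂ)))) := by
  have h2 : (2 : ℂ) ^ (-(2 * z)) = Complex.exp ((Real.log 2 : ℝ) * (-(2 * z))) := by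
    have := aux_cpow 2 two_pos (-(2 * z))
    simpa using this
  have h3 : ((x : ℂ) / 2) ^ (2 * z) = (2 : ℂ) ^ (-(2 * z)) * ((x : ℂ) ^ (2 * z - 1) * x) := by
    have h := aux_cpow (x / 2) (by positivity) (2 * z)
    push_cast at h
    rw [h, h2, aux_cpow x hx]
    have hx' : (x : ℂ) = Complex.exp (Real.log x : ℝ) := by
      rw [← Complex.ofReal_exp, Real.exp_log hx]
    nth_rw 1 [hx']
    rw [← Complex.exp_add, ← Complex.exp_add, Real.log_div hx.ne' two_ne_zero]
    push_cast
    congr 1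
    ring
  have hx0 : (x : ℂ) ≠ 0 := by exact_mod_cast hx.ne'
  rw [FF, h3, show -(x : ℂ) * Real.cosh t = -((Real.cosh t : ℝ) * (x : ℂ)) by ring]
  field_simp

lemma norm_cosh_le (s t : ℝ) : ‖Complex.cosh (2 * Complex.I * s * t)‖ ≤ 1 := by
  rw [show 2 * Complex.I * s * t = ((2 * s * t : ℝ) : ℂ) * Complex.I by push_cast; ring,
    Complex.cosh_mul_I, ← Complex.ofReal_cos, Complex.norm_real]
  exact Real.abs_cos_le_one _

lemma two_cosh_pow (a : ℂ) (t : ℝ) : (2 : ℂ) ^ (-a) * (1 / (Real.cosh t : ℝ) : ℂ) ^ a =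
    Complex.exp (-a * (Real.log (2 * Real.cosh t) : ℝ)) := by
  have hc := Real.cosh_pos t
  have h := aux_cpow (1 / Real.cosh t) (by positivity) a
  have h2 := aux_cpow 2 two_pos (-a)
  rw [Complex.ofReal_div, Complex.ofReal_one] at h
  rw [Complex.ofReal_ofNat] at h2
  rw [h, h2, ← Complex.exp_add, one_div, Real.log_inv, Real.log_mul two_ne_zero hc.ne']
  push_cast
  congr 1
  ring

lemma FF_integral (z : ℂ) (hz : 0 < z.re) (s t : ℝ) :
    ∫ x in Set.Ioi (0 : ℝ), FF z s x t = Complex.Gamma (2 * z) *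
      (Complex.exp (-(2 * z) * (Real.log (2 * Real.cosh t) : ℝ)) *
        Complex.cosh (2 * Complex.I * s * t)) := by
  rw [setIntegral_congr_fun measurableSet_Ioi (fun x hx => FF_eq z s x t hx),
    integral_const_mul, Complex.integral_cpow_mul_exp_neg_mul_Ioi (by simpa using hz)
      (Real.cosh_pos t), ← two_cosh_pow]
  ring

lemma norm_FF_le (z : ℂ) (s x t : ℝ) (hx : 0 < x) :
    ‖FF z s x t‖ ≤ ‖(2 : ℂ) ^ (-(2 * z))‖ *
      (x ^ (2 * z.re - 1) * Real.exp (-(Real.cosh t * x))) := by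
  rw [FF_eq z s x t hx, norm_mul, norm_mul, norm_mul, Complex.norm_cpow_eq_rpow_re_of_pos hx,
    Complex.norm_exp]
  have e1 : (2 * z - 1).re = 2 * z.re - 1 := by simp
  have e2 : (-((Real.cosh t : ℝ) * (x : ℂ))).re = -(Real.cosh t * x) := by
    rw [← Complex.ofReal_mul, ← Complex.ofReal_neg, Complex.ofReal_re]
  rw [e1, e2]
  apply mul_le_mul_of_nonneg_right _ (by positivity)
  exact mul_le_of_le_one_right (norm_nonneg _) (norm_cosh_le s t)

lemma FF_meas (z : ℂ) (s : ℝ) : Measurable (Function.uncurry (FF z s)) := by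
  unfold FF Function.uncurry
  have : Measurable fun p : ℝ × ℝ => ((p.1 : ℂ) / 2) ^ (2 * z) :=
    Measurable.pow_const (by fun_prop) _
  have h2 : Measurable fun p : ℝ × ℝ => Complex.exp (-(p.1 : ℂ) * Real.cosh p.2) := by
    have : Continuous fun p : ℝ × ℝ => Complex.exp (-(p.1 : ℂ) * Real.cosh p.2) := by fun_prop
    exact this.measurable
  have h3 : Measurable fun p : ℝ × ℝ => Complex.cosh (2 * Complex.I * s * p.2) := by
    have : Continuous fun p : ℝ × ℝ => Complex.cosh (2 * Complex.I * s * p.2) := by fun_prop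
    exact this.measurable
  have h4 : Measurable fun p : ℝ × ℝ => 1 / (p.1 : ℂ) := by fun_prop
  exact (this.mul (h2.mul h3)).mul h4

lemma dom_integrable (c r : ℝ) (hc : 0 < c) (hr : 0 < r) :
    IntegrableOn (fun x : ℝ => x ^ (2 * c - 1) * Real.exp (-(r * x))) (Set.Ioi 0) := by
  have := integrableOn_rpow_mul_exp_neg_mul_rpow (s := 2 * c - 1) (p := 1) (b := r)
    (by linarith) one_pos hr
  simpa using this

lemma FF_integrable (z : ℂ) (hz : 0 < z.re) (s : ℝ) :
    Integrable (Function.uncurry (FF z s))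
      ((volume.restrict (Set.Ioi (0 : ℝ))).prod (volume.restrict (Set.Ioi (0 : ℝ)))) := by
  have hm := FF_meas z s
  have hI : ∀ t : ℝ, IntegrableOn (fun x => FF z s x t) (Set.Ioi 0) := by
    intro t
    refine Integrable.mono' ((dom_integrable z.re (Real.cosh t) hz (Real.cosh_pos t)).const_mul
      ‖(2 : ℂ) ^ (-(2 * z))‖) ?_ ?_
    · exact (hm.comp (measurable_id.prodMk measurable_const)).aestronglyMeasurable
    · exact (ae_restrict_iff' measurableSet_Ioi).2
        (Filter.Eventually.of_forall fun x hx => norm_FF_le z s x t hx)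
  rw [integrable_prod_iff' hm.aestronglyMeasurable]
  refine ⟨Filter.Eventually.of_forall hI, ?_⟩
  have hb := ((bG_integrable z hz 0).norm.const_mul (Real.Gamma (2 * z.re))).integrableOn
    (s := Set.Ioi (0 : ℝ))
  refine Integrable.mono' hb ?_ ?_
  · exact (hm.norm.stronglyMeasurable.integral_prod_left').aestronglyMeasurable
  · refine Filter.Eventually.of_forall fun t => ?_
    rw [Real.norm_of_nonneg (integral_nonneg fun _ => norm_nonneg _)]
    calc _ ≤ ∫ x in Set.Ioi (0 : ℝ), ‖(2 : ℂ) ^ (-(2 * z))‖ *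
          (x ^ (2 * z.re - 1) * Real.exp (-(Real.cosh t * x))) :=
        setIntegral_mono_on (hI t).norm
          ((dom_integrable z.re (Real.cosh t) hz (Real.cosh_pos t)).const_mul _)
          measurableSet_Ioi (fun x hx => norm_FF_le z s x t hx)
      _ = _ := by
        rw [integral_const_mul, Real.integral_rpow_mul_exp_neg_mul_Ioi (by positivity)
          (Real.cosh_pos t)]
        have h := congrArg norm (two_cosh_pow (2 * z) t)
        have hc := Real.cosh_pos t
        have e : (1 / (Real.cosh t : ℝ) : ℂ) = ((1 / Real.cosh t : ℝ) : ℂ) := by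
          rw [Complex.ofReal_div, Complex.ofReal_one]
        rw [norm_mul, e, Complex.norm_cpow_eq_rpow_re_of_pos (by positivity)] at h
        have e1 : (2 * z).re = 2 * z.re := by simp
        rw [e1] at h
        rw [← mul_assoc, h, bG, mul_comm]
        simp

theorem stmt10 (z : ℂ) (hz : 0 < z.re) (s : ℝ) :
    IntegrableOn
      (fun x : ℝ =>
        ((x : ℂ) / 2) ^ (2 * z) * macdonaldK (2 * Complex.I * (s : ℂ)) x * (1 / (x : ℂ)))
      (Set.Ioi (0 : ℝ)) ∧
    Complex.Gamma (z + Complex.I * (s : ℂ)) * Complex.Gamma (z - Complex.I * (s : ℂ))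
      = 4 * ∫ x in Set.Ioi (0 : ℝ),
          ((x : ℂ) / 2) ^ (2 * z) * macdonaldK (2 * Complex.I * (s : ℂ)) x * (1 / (x : ℂ)) := by
  have hF := FF_integrable z hz s
  have key : (fun x : ℝ =>
        ((x : ℂ) / 2) ^ (2 * z) * macdonaldK (2 * Complex.I * (s : ℂ)) x * (1 / (x : ℂ))) =
      fun x => ∫ t in Set.Ioi (0 : ℝ), FF z s x t := by
    ext x
    simp only [FF, macdonaldK]
    rw [integral_mul_const, integral_const_mul]
  rw [key]
  refine ⟨hF.integral_prod_left, ?_⟩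
  rw [integral_integral_swap hF]
  simp only [FF_integral z hz s]
  rw [integral_const_mul, Complex.Gamma_mul_Gamma_eq_betaIntegral (by simpa using hz)
    (by simpa using hz), bG_integral, bG_half z hz,
    show z + Complex.I * (s : ℂ) + (z - Complex.I * s) = 2 * z by ring]
  ring
end
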